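/- (Topology independence of bag communication.) Let 𝒞 be any set of channels and ν : 𝒫 × 𝒫 → 𝒞 any channel map, and equip every channel with multiset buffers: contents are finite multisets of messages, insert(m) adds m, remove(m)(b) is defined iff m ∈ b (deleting one occurrence), and b₀ is the empty multiset. Then a finite word w is channel-compliant for the architecture (𝒞, ν) if and only if w is channel-compliant for the single-channel bag architecture, and w is channel-matched for (𝒞, ν) if and only if it is channel-matched for the single-channel bag architecture. -/

import Mathlib

/-!
A multiset `b` of messages splits over the channels: channel `c` gets the messages of `b` routed
to `c` by `ν`. This splitting `distribute ν` commutes with every step, because a message `m`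
belongs to `b` iff it belongs to the part of `b` on its own channel, and adding or deleting `m`
changes only that part. Hence a run over `ν` from the split state is the split image of the
single-channel run, with the same domain of definition (`runFrom_distribute`). Compliance agrees
at once; matchedness agrees because only the empty multiset splits into empty parts.
-/

/-- Asynchronous events: send events `p▷q!v` and receive events `p▷q?v`. -/
inductive Event (P V : Type) where
  | send (p q : P) (v : V)
  | recv (p q : P) (v : V)
deriving DecidableEq

/-- The active participant of an event: the sender of a send, the receiver of a receive. -/
def Event.active {P V : Type} : Event P V → P
  | .send p _ _ => p
  | .recv _ q _ => q

/-- A network architecture: channels `C`, buffer contents `B`, a channel map,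
partial insert/remove operations, and an empty buffer. -/
structure NetArch (P V C B : Type) where
  chan : P → P → C
  insert : P × P × V → B → Option B
  remove : P × P × V → B → Option B
  b0 : B

variable {P V C B : Type}

/-- Executing a single event on a channel state. -/
def NetArch.step [DecidableEq C] (N : NetArch P V C B) :
    Event P V → (C → B) → Option (C → B)
  | .send p q v, ξ => (N.insert (p, q, v) (ξ (N.chan p q))).map (Function.update ξ (N.chan p q))
  | .recv p q v, ξ => (N.remove (p, q, v) (ξ (N.chan p q))).map (Function.update ξ (N.chan p q))

/-- Executing a finite word of events from a channel state. -/
def NetArch.runFrom [DecidableEq C] (N : NetArch P V C B) :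
    List (Event P V) → (C → B) → Option (C → B)
  | [], ξ => some ξ
  | e :: w, ξ => (N.step e ξ).bind (N.runFrom w)

/-- The initial channel state: every channel holds the empty buffer. -/
def NetArch.init (N : NetArch P V C B) : C → B := fun _ => N.b0

/-- A finite word is channel-compliant if executing it from the initial channel
state is defined at every step. -/
def NetArch.compliant [DecidableEq C] (N : NetArch P V C B) (w : List (Event P V)) : Prop :=
  (N.runFrom w N.init).isSome

/-- A finite word is channel-matched if it is channel-compliant and reaches the
initial (all-empty) channel state. -/
def NetArch.matched [DecidableEq C] (N : NetArch P V C B) (w : List (Event P V)) : Prop :=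
  N.runFrom w N.init = some N.init

/-- Projection of a word onto the events in which participant `r` is active. -/
def proj [DecidableEq P] (r : P) (w : List (Event P V)) : List (Event P V) :=
  w.filter (fun e => decide (e.active = r))

/-- Equality under local projection. -/
def equivP [DecidableEq P] (w₁ w₂ : List (Event P V)) : Prop :=
  ∀ r : P, proj r w₁ = proj r w₂

/-- `split` replaces every synchronous message exchange `(p,q,v)` by the two
consecutive asynchronous events `p▷q!v · p▷q?v`. -/
def split : List (P × P × V) → List (Event P V)
  | [] => []
  | m :: ρ => Event.send m.1 m.2.1 m.2.2 :: Event.recv m.1 m.2.1 m.2.2 :: split ρ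

/-- FIFO insertion: append at the tail (always defined). -/
def fifoInsert {M : Type} (m : M) (b : List M) : Option (List M) := some (b ++ [m])

/-- FIFO removal: defined iff the buffer has head `m`, removing the head. -/
def fifoRemove {M : Type} [DecidableEq M] (m : M) : List M → Option (List M)
  | [] => none
  | m' :: b => if m' = m then some b else none

/-- Multiset insertion: add one occurrence (always defined). -/
def bagInsert {M : Type} (m : M) (b : Multiset M) : Option (Multiset M) := some (m ::ₘ b)

/-- Multiset removal: defined iff `m ∈ b`, deleting one occurrence. -/
def bagRemove {M : Type} [DecidableEq M] (m : M) (b : Multiset M) : Option (Multiset M) :=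
  if m ∈ b then some (b.erase m) else none

/-- Peer-to-peer FIFO architecture: one FIFO channel per sender-receiver pair. -/
def p2p (P V : Type) [DecidableEq P] [DecidableEq V] :
    NetArch P V (P × P) (List (P × P × V)) :=
  ⟨fun p q => (p, q), fifoInsert, fifoRemove, []⟩

/-- Senderbox FIFO architecture: one FIFO channel per sender. -/
def sb (P V : Type) [DecidableEq P] [DecidableEq V] :
    NetArch P V P (List (P × P × V)) :=
  ⟨fun p _ => p, fifoInsert, fifoRemove, []⟩

/-- Mailbox FIFO architecture: one FIFO channel per receiver. -/
def mb (P V : Type) [DecidableEq P] [DecidableEq V] :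
    NetArch P V P (List (P × P × V)) :=
  ⟨fun _ q => q, fifoInsert, fifoRemove, []⟩

/-- Monobox FIFO architecture: a single FIFO channel shared by all pairs. -/
def monob (P V : Type) [DecidableEq P] [DecidableEq V] :
    NetArch P V Unit (List (P × P × V)) :=
  ⟨fun _ _ => (), fifoInsert, fifoRemove, []⟩

/-- Bag architecture: a single channel holding a multiset of messages. -/
def bag (P V : Type) [DecidableEq P] [DecidableEq V] :
    NetArch P V Unit (Multiset (P × P × V)) :=
  ⟨fun _ _ => (), bagInsert, bagRemove, 0⟩

/-- The bag architecture over an arbitrary communication topology: channels `C`,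
channel map `ν`, and a multiset buffer on each channel. -/
def bagOn (P V C : Type) [DecidableEq P] [DecidableEq V] (ν : P → P → C) :
    NetArch P V C (Multiset (P × P × V)) :=
  ⟨ν, bagInsert, bagRemove, 0⟩

/-- The channel state over `ν` induced by a single global bag `b`: each channel holds the messages
of `b` that `ν` routes to it. -/
def distribute {P V C : Type} [DecidableEq C] (ν : P → P → C) (b : Multiset (P × P × V)) :
    C → Multiset (P × P × V) :=
  fun c => b.filter (fun m => ν m.1 m.2.1 = c)

lemma distribute_cons {P V C : Type} [DecidableEq C] (ν : P → P → C) (m : P × P × V)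
    (b : Multiset (P × P × V)) :
    distribute ν (m ::ₘ b) = Function.update (distribute ν b) (ν m.1 m.2.1)
      (m ::ₘ distribute ν b (ν m.1 m.2.1)) := by
  funext c
  by_cases h : c = ν m.1 m.2.1
  · subst h
    simp [distribute]
  · simp [distribute, Function.update_of_ne h, Ne.symm h]

lemma mem_distribute {P V C : Type} [DecidableEq C] (ν : P → P → C) (m : P × P × V)
    (b : Multiset (P × P × V)) : m ∈ distribute ν b (ν m.1 m.2.1) ↔ m ∈ b := by
  simp [distribute]

lemma distribute_erase {P V C : Type} [DecidableEq P] [DecidableEq V] [DecidableEq C]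
    (ν : P → P → C) (m : P × P × V) (b : Multiset (P × P × V)) (hm : m ∈ b) :
    distribute ν (b.erase m) = Function.update (distribute ν b) (ν m.1 m.2.1)
      ((distribute ν b (ν m.1 m.2.1)).erase m) := by
  obtain ⟨b, rfl⟩ := Multiset.exists_cons_of_mem hm
  simp [distribute_cons]

lemma distribute_eq_zero {P V C : Type} [DecidableEq C] (ν : P → P → C)
    (b : Multiset (P × P × V)) : (distribute ν b = fun _ => 0) ↔ b = 0 := by
  constructor
  · intro h
    refine Multiset.eq_zero_of_forall_notMem fun m hm => ?_
    rw [← mem_distribute ν, h] at hm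
    simp at hm
  · rintro rfl
    rfl

lemma step_distribute {P V C : Type} [DecidableEq P] [DecidableEq V] [DecidableEq C]
    (ν : P → P → C) (e : Event P V) (ξ : Unit → Multiset (P × P × V)) :
    (bagOn P V C ν).step e (distribute ν (ξ ())) =
      ((bag P V).step e ξ).map (fun ξnext => distribute ν (ξnext ())) := by
  cases e with
  | send p q v =>
    simp [NetArch.step, bagOn, bag, bagInsert, distribute_cons]
  | recv p q v =>
    by_cases h : (p, q, v) ∈ ξ ()
    · have hchan := (mem_distribute ν _ _).2 h
      simp only at hchan
      simp [NetArch.step, bagOn, bag, bagRemove, h, hchan, distribute_erase]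
    · have hchan := mt (mem_distribute ν _ _).1 h
      simp only at hchan
      simp [NetArch.step, bagOn, bag, bagRemove, h, hchan]

/-- The simulation: splitting commutes with whole runs, including where they are undefined. -/
lemma runFrom_distribute {P V C : Type} [DecidableEq P] [DecidableEq V] [DecidableEq C]
    (ν : P → P → C) (w : List (Event P V)) (ξ : Unit → Multiset (P × P × V)) :
    (bagOn P V C ν).runFrom w (distribute ν (ξ ())) =
      ((bag P V).runFrom w ξ).map (fun ξnext => distribute ν (ξnext ())) := by
  induction w generalizing ξ with
  | nil => rfl
  | cons e w ih =>
    simp only [NetArch.runFrom, step_distribute]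
    cases (bag P V).step e ξ with
    | none => rfl
    | some ξnext => exact ih ξnext

/-- Topology independence of bag communication: channel compliance and channel
matchedness for multiset buffers over any communication topology coincide with
those of the single-channel bag architecture. -/
theorem bag_topology_independent {P V C : Type}
    [DecidableEq P] [DecidableEq V] [DecidableEq C]
    (ν : P → P → C) (w : List (Event P V)) :
    ((bagOn P V C ν).compliant w ↔ (bag P V).compliant w) ∧
    ((bagOn P V C ν).matched w ↔ (bag P V).matched w) := by
  have key : (bagOn P V C ν).runFrom w (bagOn P V C ν).init =
      ((bag P V).runFrom w (bag P V).init).map (fun ξnext => distribute ν (ξnext ())) :=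
    runFrom_distribute ν w (bag P V).init
  unfold NetArch.compliant NetArch.matched
  rw [key]
  refine ⟨by simp, ?_⟩
  cases (bag P V).runFrom w (bag P V).init with
  | none => simp
  | some ξ =>
    simp only [Option.map_some, Option.some.injEq]
    refine (distribute_eq_zero ν (ξ ())).trans ⟨fun h => funext fun _ => h, fun h => ?_⟩
    rw [h]
    rfl
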